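/- Let n ≥ 1, let k be an integer with 0 ≤ k ≤ n-1, and let a_k, a_{k+1} > 0. Then the function x ↦ ( a_k·σ_k(x) + a_{k+1}·σ_{k+1}(x) )^{1/(k+1)} is concave on the positive orthant (0, ∞)ⁿ. -/

import Mathlib

/-- The `k`-th elementary symmetric polynomial in `n` real variables. -/
noncomputable def esymm (n k : ℕ) (x : Fin n → ℝ) : ℝ :=
  ∑ s ∈ Finset.powersetCard k (Finset.univ : Finset (Fin n)), ∏ i ∈ s, x i

/-!
Adjoining the constant `c = a / b` as one more variable turns `a σ_k + b σ_{k+1}` into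
`b σ_{k+1}` in `n + 1` variables, so only `σ_m ^ (1 / m)` has to be shown concave. It is homogeneous
of degree one, hence superadditivity suffices. As `σ_{k+1} = (σ_{k+1} / σ_k) σ_k`, Hölder's
inequality reduces this, by induction, to superadditivity of the ratios `σ_{k+1} / σ_k`
(Marcus–Lopes). Those satisfy
`(k + 2) σ_{k+2}(x) / σ_{k+1}(x) = ∑ i, x_i ∥ (σ_{k+1} / σ_k)(x without x_i)`
with `u ∥ v = u v / (u + v)` the parallel sum, which is monotone and superadditive. The ratios are
taken with the convention `0 / 0 = 0`, under which all of this holds on the closed orthant and for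
every `k`; letting `b` decrease to `0` then covers the case `b = 0`.
-/

open Finset

section Algebra

variable {ι R : Type*} [CommSemiring R]

/-- The `k`-th elementary symmetric polynomial evaluated at the values `x i` with `i` in the finite
set `s`. Letting `s` vary makes it possible to delete variables and to adjoin new ones. -/
def esymmOn (s : Finset ι) (k : ℕ) (x : ι → R) : R :=
  (s.val.map x).esymm k

theorem esymmOn_eq_sum (s : Finset ι) (k : ℕ) (x : ι → R) :
    esymmOn s k x = ∑ t ∈ s.powersetCard k, ∏ i ∈ t, x i :=
  esymm_map_val x s k

theorem esymmOn_zero (s : Finset ι) (x : ι → R) : esymmOn s 0 x = 1 := by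
  simp [esymmOn_eq_sum]

theorem esymmOn_one (s : Finset ι) (x : ι → R) : esymmOn s 1 x = ∑ i ∈ s, x i := by
  simp [esymmOn_eq_sum, powersetCard_one]

theorem esymmOn_empty_succ (k : ℕ) (x : ι → R) : esymmOn ∅ (k + 1) x = 0 := by
  simp [esymmOn, Multiset.esymm, Multiset.powersetCard_zero_right]

theorem esymmOn_smul (s : Finset ι) (k : ℕ) (c : R) (x : ι → R) :
    esymmOn s k (c • x) = c ^ k * esymmOn s k x := by
  rw [esymmOn, esymmOn, ← smul_eq_mul, Multiset.pow_smul_esymm, Multiset.map_map]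
  rfl

theorem multiset_esymm_cons_succ (m : Multiset R) (r : R) (k : ℕ) :
    (r ::ₘ m).esymm (k + 1) = m.esymm (k + 1) + r * m.esymm k := by
  simp [Multiset.esymm, Multiset.powersetCard_cons, Multiset.sum_map_mul_left]

theorem esymmOn_insert_succ [DecidableEq ι] {s : Finset ι} {i : ι} (hi : i ∉ s) (k : ℕ)
    (x : ι → R) :
    esymmOn (insert i s) (k + 1) x = esymmOn s (k + 1) x + x i * esymmOn s k x := by
  rw [esymmOn, insert_val_of_notMem hi, Multiset.map_cons, multiset_esymm_cons_succ]
  rfl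

theorem esymmOn_erase_add [DecidableEq ι] {s : Finset ι} {i : ι} (hi : i ∈ s) (k : ℕ)
    (x : ι → R) :
    esymmOn (s.erase i) (k + 1) x + x i * esymmOn (s.erase i) k x = esymmOn s (k + 1) x := by
  rw [← esymmOn_insert_succ (notMem_erase i s), insert_erase hi]

theorem esymmOn_insertNone_succ (s : Finset ι) (k : ℕ) (c : R) (x : ι → R) :
    esymmOn (insertNone s) (k + 1) (fun o => o.elim c x) =
      c * esymmOn s k x + esymmOn s (k + 1) x := by
  have hval : (insertNone s).val.map (fun o => o.elim c x) = c ::ₘ s.val.map x := by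
    simp [insertNone, Function.comp_def]
  rw [esymmOn, hval, multiset_esymm_cons_succ, add_comm]
  rfl

theorem sum_mul_esymmOn_erase [DecidableEq ι] (s : Finset ι) (k : ℕ) (x : ι → R) :
    ∑ i ∈ s, x i * esymmOn (s.erase i) k x = (k + 1) * esymmOn s (k + 1) x := by
  induction s using Finset.induction_on generalizing k with
  | empty => simp [esymmOn_empty_succ]
  | insert j s hj ih =>
    have erase_insert_comm : ∀ i ∈ s, (insert j s).erase i = insert j (s.erase i) := fun i hi =>
      erase_insert_of_ne (ne_of_mem_of_not_mem hi hj).symm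
    rw [sum_insert hj, erase_insert hj, esymmOn_insert_succ hj]
    cases k with
    | zero => simp [esymmOn_zero, esymmOn_one, add_comm]
    | succ k =>
      have sum_rest : ∑ i ∈ s, x i * esymmOn ((insert j s).erase i) (k + 1) x =
          ∑ i ∈ s, x i * esymmOn (s.erase i) (k + 1) x +
            x j * ∑ i ∈ s, x i * esymmOn (s.erase i) k x := by
        rw [mul_sum, ← sum_add_distrib]
        refine sum_congr rfl fun i hi => ?_
        rw [erase_insert_comm i hi, esymmOn_insert_succ fun h => hj (mem_of_mem_erase h)]
        ring
      rw [sum_rest, ih, ih]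
      push_cast
      ring

end Algebra

section Ordered

variable {ι R : Type*} [CommSemiring R] [PartialOrder R] [IsOrderedRing R]

theorem esymmOn_nonneg (s : Finset ι) (k : ℕ) {x : ι → R} (hx : 0 ≤ x) : 0 ≤ esymmOn s k x := by
  rw [esymmOn_eq_sum]
  exact sum_nonneg fun t _ => prod_nonneg fun i _ => hx i

theorem esymmOn_le_of_subset {s t : Finset ι} (hst : s ⊆ t) (k : ℕ) {x : ι → R} (hx : 0 ≤ x) :
    esymmOn s k x ≤ esymmOn t k x := by
  rw [esymmOn_eq_sum, esymmOn_eq_sum]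
  exact sum_le_sum_of_subset_of_nonneg (powersetCard_mono hst)
    fun _ _ _ => prod_nonneg fun i _ => hx i

theorem esymmOn_eq_zero_of_subset {s t : Finset ι} (hst : s ⊆ t) {k : ℕ} {x : ι → R} (hx : 0 ≤ x)
    (h : esymmOn t k x = 0) : esymmOn s k x = 0 :=
  le_antisymm ((esymmOn_le_of_subset hst k hx).trans_eq h) (esymmOn_nonneg s k hx)

end Ordered

section ParallelSum

variable {R : Type*} [Field R]

/-- The parallel sum `a b / (a + b)`, half the harmonic mean of `a` and `b`; it takes the value `0`
at `a = b = 0`. -/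
def parallelSum (a b : R) : R :=
  a * b / (a + b)

variable [LinearOrder R] [IsStrictOrderedRing R] {a b c d : R}

theorem parallelSum_le_parallelSum_right (ha : 0 ≤ a) (hb : 0 ≤ b) (hbc : b ≤ c) :
    parallelSum a b ≤ parallelSum a c := by
  unfold parallelSum
  rcases ha.eq_or_lt with rfl | ha
  · simp
  rw [div_le_div_iff₀ (by linarith) (by linarith)]
  nlinarith [mul_le_mul_of_nonneg_left hbc (mul_pos ha ha).le]

theorem parallelSum_add_parallelSum_le (ha : 0 ≤ a) (hb : 0 ≤ b) (hc : 0 ≤ c) (hd : 0 ≤ d) :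
    parallelSum a b + parallelSum c d ≤ parallelSum (a + c) (b + d) := by
  unfold parallelSum
  rcases (add_nonneg ha hb).eq_or_lt with hab | hab
  · obtain ⟨rfl, rfl⟩ := (add_eq_zero_iff_of_nonneg ha hb).1 hab.symm
    simp
  rcases (add_nonneg hc hd).eq_or_lt with hcd | hcd
  · obtain ⟨rfl, rfl⟩ := (add_eq_zero_iff_of_nonneg hc hd).1 hcd.symm
    simp
  rw [div_add_div _ _ hab.ne' hcd.ne', div_le_div_iff₀ (by positivity) (by linarith)]
  nlinarith [sq_nonneg (a * d - b * c)]

end ParallelSum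

section Ratio

variable {ι R : Type*} [Field R]

/-- The ratio `σ_{k+1} / σ_k` of consecutive elementary symmetric polynomials, which is homogeneous
of degree one. Where `σ_k` vanishes its value is `0`. -/
def esymmRatio (s : Finset ι) (k : ℕ) (x : ι → R) : R :=
  esymmOn s (k + 1) x / esymmOn s k x

theorem esymmRatio_zero (s : Finset ι) (x : ι → R) : esymmRatio s 0 x = ∑ i ∈ s, x i := by
  rw [esymmRatio, zero_add, esymmOn_zero, esymmOn_one, div_one]

variable [LinearOrder R] [IsStrictOrderedRing R] {x y : ι → R}

theorem esymmRatio_nonneg (s : Finset ι) (k : ℕ) (hx : 0 ≤ x) : 0 ≤ esymmRatio s k x :=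
  div_nonneg (esymmOn_nonneg s _ hx) (esymmOn_nonneg s _ hx)

theorem esymmOn_succ_eq_zero {s : Finset ι} {k : ℕ} (hx : 0 ≤ x) (h : esymmOn s k x = 0) :
    esymmOn s (k + 1) x = 0 := by
  classical
  have hsum := sum_mul_esymmOn_erase s k x
  rw [sum_eq_zero fun i _ => by
    rw [esymmOn_eq_zero_of_subset (erase_subset i s) hx h, mul_zero]] at hsum
  exact (mul_eq_zero.1 hsum.symm).resolve_left (Nat.cast_add_one_ne_zero k)

theorem esymmOn_mul_esymmRatio (s : Finset ι) (k : ℕ) (hx : 0 ≤ x) :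
    esymmOn s k x * esymmRatio s k x = esymmOn s (k + 1) x :=
  mul_div_cancel_of_imp' (esymmOn_succ_eq_zero hx)

theorem mul_esymmOn_erase_div [DecidableEq ι] {s : Finset ι} {i : ι} (hi : i ∈ s) (k : ℕ)
    (hx : 0 ≤ x) :
    x i * esymmOn (s.erase i) (k + 1) x / esymmOn s (k + 1) x =
      parallelSum (x i) (esymmRatio (s.erase i) k x) := by
  rw [← esymmOn_erase_add hi, parallelSum, esymmRatio]
  by_cases h : esymmOn (s.erase i) k x = 0
  · simp [h, esymmOn_succ_eq_zero hx h]
  · rw [add_div' _ _ _ h, ← mul_div_assoc, div_div_div_cancel_right₀ h,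
      add_comm (x i * _)]

theorem esymmRatio_succ [DecidableEq ι] (s : Finset ι) (k : ℕ) (hx : 0 ≤ x) :
    esymmRatio s (k + 1) x =
      ((k : R) + 2)⁻¹ * ∑ i ∈ s, parallelSum (x i) (esymmRatio (s.erase i) k x) := by
  have hk : (k : R) + 2 ≠ 0 := by positivity
  have hsum := sum_mul_esymmOn_erase s (k + 1) x
  rw [Nat.cast_succ, add_assoc, one_add_one_eq_two] at hsum
  rw [← sum_congr rfl fun i hi => mul_esymmOn_erase_div hi k hx, ← sum_div, hsum, mul_div_assoc,
    inv_mul_cancel_left₀ hk, esymmRatio]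

theorem esymmRatio_add_le (s : Finset ι) (k : ℕ) (hx : 0 ≤ x) (hy : 0 ≤ y) :
    esymmRatio s k x + esymmRatio s k y ≤ esymmRatio s k (x + y) := by
  classical
  induction k generalizing s with
  | zero => simp [esymmRatio_zero, sum_add_distrib]
  | succ k ih =>
    rw [esymmRatio_succ s k hx, esymmRatio_succ s k hy, esymmRatio_succ s k (add_nonneg hx hy),
      ← mul_add, ← sum_add_distrib]
    gcongr with i
    have hrx := esymmRatio_nonneg (s.erase i) k hx
    have hry := esymmRatio_nonneg (s.erase i) k hy
    calc
      _ ≤ parallelSum (x i + y i) (esymmRatio (s.erase i) k x + esymmRatio (s.erase i) k y) :=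
        parallelSum_add_parallelSum_le (hx i) hrx (hy i) hry
      _ ≤ _ := parallelSum_le_parallelSum_right (add_nonneg (hx i) (hy i)) (add_nonneg hrx hry)
        (ih (s.erase i))

end Ratio

section Concave

theorem sum_rpow_mul_rpow_le {κ : Type*} (s : Finset κ) {f g : κ → ℝ} {u v : ℝ} (hf : 0 ≤ f)
    (hg : 0 ≤ g) (hu : 0 < u) (hv : 0 < v) (huv : u + v = 1) :
    ∑ i ∈ s, f i ^ u * g i ^ v ≤ (∑ i ∈ s, f i) ^ u * (∑ i ∈ s, g i) ^ v := by
  have holder := Real.inner_le_Lp_mul_Lq_of_nonneg s (Real.HolderConjugate.inv_inv hu hv huv)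
    (fun i _ => Real.rpow_nonneg (hf i) u) (fun i _ => Real.rpow_nonneg (hg i) v)
  simpa only [Real.rpow_rpow_inv (hf _) hu.ne', Real.rpow_rpow_inv (hg _) hv.ne', one_div,
    inv_inv] using holder

theorem add_rpow_mul_rpow_le {a b c d u v : ℝ} (ha : 0 ≤ a) (hb : 0 ≤ b) (hc : 0 ≤ c)
    (hd : 0 ≤ d) (hu : 0 < u) (hv : 0 < v) (huv : u + v = 1) :
    a ^ u * b ^ v + c ^ u * d ^ v ≤ (a + c) ^ u * (b + d) ^ v := by
  have hac : 0 ≤ ![a, c] := by simp [Pi.le_def, Fin.forall_fin_two, ha, hc]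
  have hbd : 0 ≤ ![b, d] := by simp [Pi.le_def, Fin.forall_fin_two, hb, hd]
  simpa [Fin.sum_univ_two] using sum_rpow_mul_rpow_le univ hac hbd hu hv huv

theorem concaveOn_of_add_le_of_smul_eq {𝕜 E β : Type*} [Semiring 𝕜] [PartialOrder 𝕜]
    [AddCommMonoid E] [Module 𝕜 E] [AddCommMonoid β] [PartialOrder β] [Module 𝕜 β]
    {C : ConvexCone 𝕜 E} {f : E → β}
    (hadd : ∀ x ∈ C, ∀ y ∈ C, f x + f y ≤ f (x + y))
    (hsmul : ∀ c : 𝕜, 0 < c → ∀ x ∈ C, f (c • x) = c • f x) :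
    ConcaveOn 𝕜 C f := by
  refine concaveOn_iff_forall_pos.2 ⟨C.convex, fun x hx y hy s t hs ht _ => ?_⟩
  rw [← hsmul s hs x hx, ← hsmul t ht y hy]
  exact hadd _ (C.smul_mem hs hx) _ (C.smul_mem ht hy)

variable {ι : Type*} (s : Finset ι) (k : ℕ)

theorem esymmOn_succ_succ_rpow {x : ι → ℝ} (hx : 0 ≤ x) :
    esymmOn s (k + 2) x ^ ((k : ℝ) + 2)⁻¹ =
      (esymmOn s (k + 1) x ^ ((k : ℝ) + 1)⁻¹) ^ (((k : ℝ) + 1) / (k + 2)) *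
        esymmRatio s (k + 1) x ^ ((k : ℝ) + 2)⁻¹ := by
  have hk : (k : ℝ) + 1 ≠ 0 := by positivity
  rw [← Real.rpow_mul (esymmOn_nonneg s _ hx), ← mul_div_assoc, inv_mul_cancel₀ hk, one_div,
    ← Real.mul_rpow (esymmOn_nonneg s _ hx) (esymmRatio_nonneg s _ hx),
    esymmOn_mul_esymmRatio s _ hx]

theorem esymmOn_rpow_add_le {x y : ι → ℝ} (hx : 0 ≤ x) (hy : 0 ≤ y) :
    esymmOn s (k + 1) x ^ ((k : ℝ) + 1)⁻¹ + esymmOn s (k + 1) y ^ ((k : ℝ) + 1)⁻¹ ≤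
      esymmOn s (k + 1) (x + y) ^ ((k : ℝ) + 1)⁻¹ := by
  have hxy : 0 ≤ x + y := add_nonneg hx hy
  induction k with
  | zero => simp [esymmOn_one, sum_add_distrib]
  | succ k ih =>
    have root_nonneg {z : ι → ℝ} (hz : 0 ≤ z) : 0 ≤ esymmOn s (k + 1) z ^ ((k : ℝ) + 1)⁻¹ :=
      Real.rpow_nonneg (esymmOn_nonneg s _ hz) _
    have ratio_nonneg {z : ι → ℝ} (hz : 0 ≤ z) : 0 ≤ esymmRatio s (k + 1) z :=
      esymmRatio_nonneg s _ hz
    rw [Nat.cast_succ, add_assoc (k : ℝ), one_add_one_eq_two, esymmOn_succ_succ_rpow s k hx,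
      esymmOn_succ_succ_rpow s k hy, esymmOn_succ_succ_rpow s k hxy]
    calc
      _ ≤ (esymmOn s (k + 1) x ^ ((k : ℝ) + 1)⁻¹ + esymmOn s (k + 1) y ^ ((k : ℝ) + 1)⁻¹) ^
              (((k : ℝ) + 1) / (k + 2)) *
            (esymmRatio s (k + 1) x + esymmRatio s (k + 1) y) ^ ((k : ℝ) + 2)⁻¹ :=
        add_rpow_mul_rpow_le (root_nonneg hx) (ratio_nonneg hx) (root_nonneg hy) (ratio_nonneg hy)
          (by positivity) (by positivity) (by field_simp; ring)
      _ ≤ _ := by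
        have root_add_nonneg := add_nonneg (root_nonneg hx) (root_nonneg hy)
        have ratio_add_nonneg := add_nonneg (ratio_nonneg hx) (ratio_nonneg hy)
        have ratio_add_le := esymmRatio_add_le s (k + 1) hx hy
        have := root_nonneg hxy
        gcongr

theorem esymmOn_smul_rpow {c : ℝ} (hc : 0 ≤ c) {x : ι → ℝ} (hx : 0 ≤ x) :
    esymmOn s (k + 1) (c • x) ^ ((k : ℝ) + 1)⁻¹ = c * esymmOn s (k + 1) x ^ ((k : ℝ) + 1)⁻¹ := by
  rw [esymmOn_smul, Real.mul_rpow (by positivity) (esymmOn_nonneg s _ hx), ← Nat.cast_succ,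
    Real.pow_rpow_inv_natCast hc k.succ_ne_zero]

theorem concaveOn_esymmOn_rpow :
    ConcaveOn ℝ (Set.Ici (0 : ι → ℝ)) fun x => esymmOn s (k + 1) x ^ ((k : ℝ) + 1)⁻¹ :=
  concaveOn_of_add_le_of_smul_eq (C := ConvexCone.positive ℝ (ι → ℝ))
    (fun _ hx _ hy => esymmOn_rpow_add_le s k hx hy)
    (fun _ hc _ hx => esymmOn_smul_rpow s k hc.le hx)

/-- The affine map adjoining to the variables `x` an extra one, indexed by `none`, with the
constant value `c`. -/
def adjoinConst (ι : Type*) (c : ℝ) : (ι → ℝ) →ᵃ[ℝ] (Option ι → ℝ) :=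
  AffineMap.pi fun o => o.elim (AffineMap.const ℝ _ c) fun i => (LinearMap.proj i).toAffineMap

theorem adjoinConst_apply (c : ℝ) (x : ι → ℝ) : adjoinConst ι c x = fun o => o.elim c x := by
  ext (_ | _) <;> rfl

theorem adjoinConst_nonneg {c : ℝ} (hc : 0 ≤ c) {x : ι → ℝ} (hx : 0 ≤ x) :
    0 ≤ adjoinConst ι c x := by
  rw [adjoinConst_apply]
  rintro (_ | i)
  exacts [hc, hx i]

theorem concaveOn_mul_esymmOn_add_esymmOn_succ_rpow {c : ℝ} (hc : 0 ≤ c) :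
    ConcaveOn ℝ (Set.Ici (0 : ι → ℝ))
      fun x => (c * esymmOn s k x + esymmOn s (k + 1) x) ^ ((k : ℝ) + 1)⁻¹ := by
  have hcomp := ((concaveOn_esymmOn_rpow (insertNone s) k).comp_affineMap (adjoinConst ι c)).subset
    (s := Set.Ici 0) (fun x hx => adjoinConst_nonneg hc hx) (convex_Ici 0)
  simpa only [Function.comp_def, adjoinConst_apply, esymmOn_insertNone_succ] using hcomp

theorem concaveOn_mul_esymmOn_add_mul_esymmOn_succ_rpow {a b : ℝ} (ha : 0 ≤ a) (hb : 0 < b) :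
    ConcaveOn ℝ (Set.Ici (0 : ι → ℝ))
      fun x => (a * esymmOn s k x + b * esymmOn s (k + 1) x) ^ ((k : ℝ) + 1)⁻¹ := by
  have hab : 0 ≤ a / b := div_nonneg ha hb.le
  refine ((concaveOn_mul_esymmOn_add_esymmOn_succ_rpow s k hab).smul
    (Real.rpow_nonneg hb.le ((k : ℝ) + 1)⁻¹)).congr fun x hx => ?_
  have hσ := add_nonneg (mul_nonneg hab (esymmOn_nonneg s k hx)) (esymmOn_nonneg s (k + 1) hx)
  beta_reduce
  rw [smul_eq_mul, ← Real.mul_rpow hb.le hσ, mul_add, ← mul_assoc, mul_div_cancel₀ _ hb.ne']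

end Concave

theorem convex_setOf_forall_pos {ι : Type*} : Convex ℝ {x : ι → ℝ | ∀ i, 0 < x i} := by
  simpa only [Set.pi, Set.mem_univ, true_imp_iff, Set.mem_Ioi] using
    convex_pi (s := Set.univ) fun (_ : ι) _ => convex_Ioi (𝕜 := ℝ) (0 : ℝ)

theorem esymm_eq_esymmOn (n k : ℕ) (x : Fin n → ℝ) : esymm n k x = esymmOn univ k x :=
  (esymmOn_eq_sum univ k x).symm

theorem stmt10_general {ι : Type*} (s : Finset ι) (k : ℕ) {a b : ℝ} (ha : 0 ≤ a) (hb : 0 ≤ b) :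
    ConcaveOn ℝ (Set.Ici (0 : ι → ℝ))
      fun x => (a * esymmOn s k x + b * esymmOn s (k + 1) x) ^ ((k : ℝ) + 1)⁻¹ := by
  have hcont : Continuous fun (β : ℝ) (x : ι → ℝ) =>
      (a * esymmOn s k x + β * esymmOn s (k + 1) x) ^ ((k : ℝ) + 1)⁻¹ :=
    continuous_pi fun x => Continuous.rpow_const (by fun_prop) fun _ => Or.inr (by positivity)
  exact isClosed_setOfPred_concaveOn.mem_of_tendsto (hcont.continuousWithinAt (s := Set.Ioi b))
    (eventually_nhdsWithin_of_forall fun β hβ =>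
      concaveOn_mul_esymmOn_add_mul_esymmOn_succ_rpow s k ha (hb.trans_lt hβ))

theorem stmt10 (n k : ℕ) (hn : 1 ≤ n) (hk : k ≤ n - 1) (a b : ℝ) (ha : 0 < a) (hb : 0 < b) :
    ConcaveOn ℝ {x : Fin n → ℝ | ∀ i, 0 < x i}
      (fun x => (a * esymm n k x + b * esymm n (k + 1) x) ^ (((k : ℝ) + 1)⁻¹)) := by
  simpa only [esymm_eq_esymmOn] using (stmt10_general univ k ha.le hb.le).subset
    (fun x hx i => (hx i).le) convex_setOf_forall_pos
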